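/- For each i ≥ 0, the F_2-vector space N^tmf_{8i} (the span of the monomials of T of weight 8i) is finite-dimensional, and its dimension equals the number of monomials of B of weight at most 4i, i.e. dim_{F_2} N^tmf_{8i} = dim_{F_2} M_bo(4i) = Σ_{j=0}^{i} dim_{F_2} N^bo_{4j}, where N^bo_{4j} is the span of the monomials of B of weight 4j and M_bo(4i) is the span of the monomials of B of weight at most 4i. -/

import Mathlib

open MvPolynomial

noncomputable section

/-- The dual Steenrod algebra at p = 2: the polynomial algebra `F₂[ζ₁, ζ₂, …]`
over `F₂ = ZMod 2` with variables indexed by the positive integers. -/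
abbrev DualSteenrod : Type := MvPolynomial ℕ+ (ZMod 2)

/-- The weight of the monomial `ζ^I`: `ω(ζ^I) = Σᵢ Iᵢ · 2^(i-1)`. -/
def wt (I : ℕ+ →₀ ℕ) : ℕ := I.sum fun i e => e * 2 ^ ((i : ℕ) - 1)

/-- The degree of the monomial `ζ^I`: `deg(ζ^I) = Σᵢ Iᵢ · (2^i − 1)`,
coming from the grading `deg(ζᵢ) = 2^i − 1`. -/
def degW (I : ℕ+ →₀ ℕ) : ℕ := I.sum fun i e => e * (2 ^ (i : ℕ) - 1)

/-- Exponent condition cutting out `T = H_* tmf`: `8 ∣ I₁`, `4 ∣ I₂`, `2 ∣ I₃`. -/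
def Tcond (I : ℕ+ →₀ ℕ) : Prop := 8 ∣ I 1 ∧ 4 ∣ I 2 ∧ 2 ∣ I 3

/-- Exponent condition cutting out `B = H_* bo`: `4 ∣ I₁`, `2 ∣ I₂`. -/
def Bcond (I : ℕ+ →₀ ℕ) : Prop := 4 ∣ I 1 ∧ 2 ∣ I 2

/-- Exponent condition cutting out `Z = H_* HZ`: `2 ∣ I₁`. -/
def Zcond (I : ℕ+ →₀ ℕ) : Prop := 2 ∣ I 1

/-- `T = H_* tmf`: the `F₂`-span of the monomials `ζ^I` with `8 ∣ I₁`, `4 ∣ I₂`, `2 ∣ I₃`. -/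
def Tsub : Submodule (ZMod 2) DualSteenrod :=
  Submodule.span (ZMod 2) {m | ∃ I, Tcond I ∧ m = monomial I (1 : ZMod 2)}

/-- `B = H_* bo`: the `F₂`-span of the monomials `ζ^I` with `4 ∣ I₁`, `2 ∣ I₂`. -/
def Bsub : Submodule (ZMod 2) DualSteenrod :=
  Submodule.span (ZMod 2) {m | ∃ I, Bcond I ∧ m = monomial I (1 : ZMod 2)}

/-- `Z = H_* HZ`: the `F₂`-span of the monomials `ζ^I` with `2 ∣ I₁`. -/
def Zsub : Submodule (ZMod 2) DualSteenrod :=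
  Submodule.span (ZMod 2) {m | ∃ I, Zcond I ∧ m = monomial I (1 : ZMod 2)}

/-- The `F₂`-algebra homomorphism `V : A → A` with `V(ζ₁) = 1` and
`V(ζᵢ) = ζ_{i−1}` for `i ≥ 2`. -/
def V : DualSteenrod →ₐ[ZMod 2] DualSteenrod :=
  aeval fun i : ℕ+ => if i = 1 then 1 else X (i - 1)

/-- `N^tmf_{8i}`: the `F₂`-span of the monomials of `T` of weight `8i`. -/
def Ntmf (i : ℕ) : Submodule (ZMod 2) DualSteenrod :=
  Submodule.span (ZMod 2) {m | ∃ I, Tcond I ∧ wt I = 8 * i ∧ m = monomial I (1 : ZMod 2)}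

/-- `N^bo_{4j}`: the `F₂`-span of the monomials of `B` of weight `4j`. -/
def Nbo (j : ℕ) : Submodule (ZMod 2) DualSteenrod :=
  Submodule.span (ZMod 2) {m | ∃ I, Bcond I ∧ wt I = 4 * j ∧ m = monomial I (1 : ZMod 2)}

/-- `N^Z_{2k}`: the `F₂`-span of the monomials of `Z` of weight `2k`. -/
def NZ (k : ℕ) : Submodule (ZMod 2) DualSteenrod :=
  Submodule.span (ZMod 2) {m | ∃ I, Zcond I ∧ wt I = 2 * k ∧ m = monomial I (1 : ZMod 2)}

/-- `M_bo(4i)`: the `F₂`-span of the monomials of `B` of weight at most `4i`. -/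
def Mbo (i : ℕ) : Submodule (ZMod 2) DualSteenrod :=
  Submodule.span (ZMod 2) {m | ∃ I, Bcond I ∧ wt I ≤ 4 * i ∧ m = monomial I (1 : ZMod 2)}

/-- `M_HZ(2j)`: the `F₂`-span of the monomials of `Z` of weight at most `2j`
(the homology of the `j`-th integral Brown–Gitler spectrum). -/
def MHZ (j : ℕ) : Submodule (ZMod 2) DualSteenrod :=
  Submodule.span (ZMod 2) {m | ∃ I, Zcond I ∧ wt I ≤ 2 * j ∧ m = monomial I (1 : ZMod 2)}

/-- The degree-`d` homogeneous part of `N^tmf_{8i}` (degrees taken in `ℤ`). -/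
def NtmfDeg (i : ℕ) (d : ℤ) : Submodule (ZMod 2) DualSteenrod :=
  Submodule.span (ZMod 2)
    {m | ∃ I, Tcond I ∧ wt I = 8 * i ∧ (degW I : ℤ) = d ∧ m = monomial I (1 : ZMod 2)}

/-- The degree-`d` homogeneous part of `M_bo(4i)` (degrees taken in `ℤ`). -/
def MboDeg (i : ℕ) (d : ℤ) : Submodule (ZMod 2) DualSteenrod :=
  Submodule.span (ZMod 2)
    {m | ∃ I, Bcond I ∧ wt I ≤ 4 * i ∧ (degW I : ℤ) = d ∧ m = monomial I (1 : ZMod 2)}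

/-- The degree-`d` homogeneous part of `N^bo_{4j}` (degrees taken in `ℤ`). -/
def NboDeg (j : ℕ) (d : ℤ) : Submodule (ZMod 2) DualSteenrod :=
  Submodule.span (ZMod 2)
    {m | ∃ I, Bcond I ∧ wt I = 4 * j ∧ (degW I : ℤ) = d ∧ m = monomial I (1 : ZMod 2)}

/-- The degree-`d` homogeneous part of `M_HZ(2j)` (degrees taken in `ℤ`). -/
def MHZdeg (j : ℕ) (d : ℤ) : Submodule (ZMod 2) DualSteenrod :=
  Submodule.span (ZMod 2)
    {m | ∃ I, Zcond I ∧ wt I ≤ 2 * j ∧ (degW I : ℤ) = d ∧ m = monomial I (1 : ZMod 2)}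

/-- The degree-`d` homogeneous part of `T` (degrees taken in `ℤ`). -/
def Tdeg (d : ℤ) : Submodule (ZMod 2) DualSteenrod :=
  Submodule.span (ZMod 2)
    {m | ∃ I, Tcond I ∧ (degW I : ℤ) = d ∧ m = monomial I (1 : ZMod 2)}

theorem wt_finite (n : ℕ) : {I : ℕ+ →₀ ℕ | wt I ≤ n}.Finite := by
  classical
  refine (Set.finite_Iic (Finsupp.onFinset (Finset.univ.image (fun k : Fin n => k.val.succPNat))
    (fun i : ℕ+ => if (i : ℕ) ≤ n then n else 0) ?_)).subset ?_
  · intro i hi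
    have hi' : (i : ℕ) ≤ n := by
      by_contra h
      simp [h] at hi
    rw [Finset.mem_image]
    have hp := i.pos
    refine ⟨⟨(i : ℕ) - 1, by omega⟩, Finset.mem_univ _, ?_⟩
    apply PNat.eq
    simp only [Nat.succPNat_coe]
    omega
  · intro I hI i
    simp only [Set.mem_ofPred_eq] at hI
    by_cases h0 : I i = 0
    · simp [h0]
    have h1 : I i * 2 ^ ((i : ℕ) - 1) ≤ wt I :=
      Finset.single_le_sum (f := fun i : ℕ+ => I i * 2 ^ ((i : ℕ) - 1))
        (fun _ _ => Nat.zero_le _) (Finsupp.mem_support_iff.2 h0)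
    have h2 : (i : ℕ) - 1 < 2 ^ ((i : ℕ) - 1) := Nat.lt_two_pow_self
    have h3 : 2 ^ ((i : ℕ) - 1) ≤ I i * 2 ^ ((i : ℕ) - 1) :=
      Nat.le_mul_of_pos_left _ (Nat.pos_of_ne_zero h0)
    have h4 : I i ≤ I i * 2 ^ ((i : ℕ) - 1) := Nat.le_mul_of_pos_right _ (by positivity)
    have h5 : (i : ℕ) ≤ n := by omega
    simp only [Finsupp.onFinset_apply, h5, if_true]
    omega

/-- Prepend an exponent of `ζ₁`, shifting all the other variables up by one. -/
def unshift (a : ℕ) (J : ℕ+ →₀ ℕ) : ℕ+ →₀ ℕ :=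
  Finsupp.single 1 a + J.mapDomain (fun i => i + 1)

theorem succ_inj' : Function.Injective (fun i : ℕ+ => i + 1) := fun a b h => by simpa using h

theorem add_one_ne_one' (i : ℕ+) : i + 1 ≠ 1 := by
  intro h
  have h' := congrArg (fun x : ℕ+ => (x : ℕ)) h
  have := i.pos
  simp only [PNat.add_coe, PNat.one_coe] at h'
  omega

theorem unshift_one (a : ℕ) (J : ℕ+ →₀ ℕ) : unshift a J 1 = a := by
  rw [unshift, Finsupp.add_apply, Finsupp.mapDomain_of_notMem_range]
  · simp
  · rintro ⟨x, hx⟩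
    exact add_one_ne_one' x hx

theorem unshift_succ (a : ℕ) (J : ℕ+ →₀ ℕ) (i : ℕ+) : unshift a J (i + 1) = J i := by
  rw [unshift, Finsupp.add_apply]
  have h := Finsupp.mapDomain_apply succ_inj' J i
  rw [h, Finsupp.single_eq_of_ne (add_one_ne_one' i), zero_add]

theorem exists_unshift (I : ℕ+ →₀ ℕ) : ∃ J, I = unshift (I 1) J := by
  refine ⟨I.comapDomain (fun i => i + 1) succ_inj'.injOn, ?_⟩
  ext i
  induction i using PNat.recOn with
  | one => rw [unshift_one]
  | succ i _ => rw [unshift_succ]; rfl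

theorem wt_unshift (a : ℕ) (J : ℕ+ →₀ ℕ) : wt (unshift a J) = a + 2 * wt J := by
  classical
  unfold wt unshift
  rw [Finsupp.sum_add_index' (by simp) (by intros; ring), Finsupp.sum_single_index (by simp),
    Finsupp.sum_mapDomain_index (by simp) (by intros; ring)]
  simp only [Finsupp.sum, Finset.mul_sum]
  congr 1
  · simp
  · refine Finset.sum_congr rfl fun i _ => ?_
    obtain ⟨k, hk⟩ : ∃ k, (i : ℕ) = k + 1 := ⟨(i : ℕ) - 1, by have := i.pos; omega⟩
    simp only [PNat.add_coe, hk, PNat.one_coe, Nat.add_sub_cancel]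
    ring

theorem four_dvd_wt {J : ℕ+ →₀ ℕ} (h : Bcond J) : 4 ∣ wt J := by
  obtain ⟨K, hK⟩ := exists_unshift J
  obtain ⟨L, hL⟩ := exists_unshift K
  have h2 : J 2 = K 1 := by
    rw [hK]; exact unshift_succ _ K 1
  have e1 : wt J = J 1 + 2 * wt K := by conv_lhs => rw [hK, wt_unshift]
  have e2 : wt K = K 1 + 2 * wt L := by conv_lhs => rw [hL, wt_unshift]
  obtain ⟨ha, hb⟩ := h
  omega

theorem Tcond_unshift (a : ℕ) (J : ℕ+ →₀ ℕ) : Tcond (unshift a J) ↔ 8 ∣ a ∧ Bcond J := by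
  have h2 : unshift a J 2 = J 1 := unshift_succ a J 1
  have h3 : unshift a J 3 = J 2 := unshift_succ a J 2
  simp [Tcond, Bcond, unshift_one, h2, h3]

theorem T_eq_image (i : ℕ) : {I : ℕ+ →₀ ℕ | Tcond I ∧ wt I = 8 * i} =
    (fun J => unshift (8 * i - 2 * wt J) J) '' {J : ℕ+ →₀ ℕ | Bcond J ∧ wt J ≤ 4 * i} := by
  ext I
  constructor
  · rintro ⟨hT, hw⟩
    obtain ⟨J, hJ⟩ := exists_unshift I
    have e1 : wt I = I 1 + 2 * wt J := by conv_lhs => rw [hJ, wt_unshift]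
    rw [hJ, Tcond_unshift] at hT
    refine ⟨J, ⟨hT.2, by omega⟩, ?_⟩
    have : 8 * i - 2 * wt J = I 1 := by omega
    simp only [this]
    exact hJ.symm
  · rintro ⟨J, ⟨hB, hw⟩, rfl⟩
    have := four_dvd_wt hB
    refine ⟨(Tcond_unshift _ _).2 ⟨by omega, hB⟩, ?_⟩
    simp only [wt_unshift]
    omega

theorem T_ncard (i : ℕ) : {I : ℕ+ →₀ ℕ | Tcond I ∧ wt I = 8 * i}.ncard =
    {J : ℕ+ →₀ ℕ | Bcond J ∧ wt J ≤ 4 * i}.ncard := by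
  rw [T_eq_image]
  refine Set.ncard_image_of_injective _ fun J K h => ?_
  ext x
  have := DFunLike.congr_fun h (x + 1)
  simpa only [unshift_succ] using this

theorem span_fin (P : (ℕ+ →₀ ℕ) → Prop) (h : {I | P I}.Finite) :
    FiniteDimensional (ZMod 2) (Submodule.span (ZMod 2)
      {m : DualSteenrod | ∃ I, P I ∧ m = monomial I (1 : ZMod 2)}) := by
  apply FiniteDimensional.span_of_finite
  refine (h.image fun I => monomial I (1 : ZMod 2)).subset ?_
  rintro _ ⟨I, hI, rfl⟩
  exact ⟨I, hI, rfl⟩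

theorem span_rank (P : (ℕ+ →₀ ℕ) → Prop) (h : {I | P I}.Finite) :
    Module.finrank (ZMod 2) (Submodule.span (ZMod 2)
      {m : DualSteenrod | ∃ I, P I ∧ m = monomial I (1 : ZMod 2)}) = {I | P I}.ncard := by
  have : Fintype {I | P I} := h.fintype
  have hli : LinearIndependent (ZMod 2)
      (fun I : {I | P I} => (monomial I.1 (1 : ZMod 2) : DualSteenrod)) := by
    have := (basisMonomials ℕ+ (ZMod 2)).linearIndependent.comp
      (fun I : {I | P I} => I.1) Subtype.val_injective
    simpa [Function.comp_def, coe_basisMonomials] using this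
  have hr := finrank_span_eq_card hli
  rw [← Nat.card_eq_fintype_card, Nat.card_coe_set_eq] at hr
  have hs : {m : DualSteenrod | ∃ I, P I ∧ m = monomial I (1 : ZMod 2)} =
      Set.range (fun I : {I | P I} => (monomial I.1 (1 : ZMod 2) : DualSteenrod)) := by
    ext m
    simp [eq_comm]
  rw [hs]
  exact hr

theorem B_sum (i : ℕ) : {I : ℕ+ →₀ ℕ | Bcond I ∧ wt I ≤ 4 * i}.ncard =
    ∑ j ∈ Finset.range (i + 1), {I : ℕ+ →₀ ℕ | Bcond I ∧ wt I = 4 * j}.ncard := by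
  induction i with
  | zero => simp
  | succ i ih =>
    have f1 : {I : ℕ+ →₀ ℕ | Bcond I ∧ wt I ≤ 4 * i}.Finite :=
      (wt_finite (4 * i)).subset fun I hI => hI.2
    have f2 : {I : ℕ+ →₀ ℕ | Bcond I ∧ wt I = 4 * (i + 1)}.Finite :=
      (wt_finite (4 * (i + 1))).subset fun I hI => hI.2.le
    rw [Finset.sum_range_succ, ← ih, ← Set.ncard_union_eq (hs := f1) (ht := f2)]
    · congr 1
      ext I
      simp only [Set.mem_ofPred_eq, Set.mem_union, ← and_or_left]
      refine and_congr_right fun hB => ?_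
      have := four_dvd_wt hB
      omega
    · rw [Set.disjoint_left]
      rintro I ⟨_, h1⟩ ⟨_, h2⟩
      omega

/-- For each `i ≥ 0`, the space `N^tmf_{8i}` is finite dimensional, its dimension is the
number of monomials of `B` of weight at most `4i`, and
`dim N^tmf_{8i} = dim M_bo(4i) = Σ_{j=0}^{i} dim N^bo_{4j}`. -/
theorem dim_Ntmf_eq_dim_Mbo :
    ∀ i : ℕ,
      FiniteDimensional (ZMod 2) ↥(Ntmf i) ∧
      Module.finrank (ZMod 2) ↥(Ntmf i) =
        Set.ncard {I : ℕ+ →₀ ℕ | Bcond I ∧ wt I ≤ 4 * i} ∧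
      Module.finrank (ZMod 2) ↥(Ntmf i) = Module.finrank (ZMod 2) ↥(Mbo i) ∧
      Module.finrank (ZMod 2) ↥(Mbo i) =
        ∑ j ∈ Finset.range (i + 1), Module.finrank (ZMod 2) ↥(Nbo j) := by
  intro i
  have hT : {I : ℕ+ →₀ ℕ | Tcond I ∧ wt I = 8 * i}.Finite :=
    (wt_finite (8 * i)).subset fun I hI => hI.2.le
  have hM : {I : ℕ+ →₀ ℕ | Bcond I ∧ wt I ≤ 4 * i}.Finite :=
    (wt_finite (4 * i)).subset fun I hI => hI.2
  have hN : ∀ j, {I : ℕ+ →₀ ℕ | Bcond I ∧ wt I = 4 * j}.Finite := fun j =>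
    (wt_finite (4 * j)).subset fun I hI => hI.2.le
  have rT := span_rank (fun I => Tcond I ∧ wt I = 8 * i) hT
  have rM := span_rank (fun I => Bcond I ∧ wt I ≤ 4 * i) hM
  have fT := span_fin (fun I => Tcond I ∧ wt I = 8 * i) hT
  have sT : (Submodule.span (ZMod 2) {m : DualSteenrod | ∃ I, (Tcond I ∧ wt I = 8 * i) ∧
      m = monomial I (1 : ZMod 2)}) = Ntmf i := by simp only [and_assoc, Ntmf]
  have sM : (Submodule.span (ZMod 2) {m : DualSteenrod | ∃ I, (Bcond I ∧ wt I ≤ 4 * i) ∧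
      m = monomial I (1 : ZMod 2)}) = Mbo i := by simp only [and_assoc, Mbo]
  have sN : ∀ j, (Submodule.span (ZMod 2) {m : DualSteenrod | ∃ I, (Bcond I ∧ wt I = 4 * j) ∧
      m = monomial I (1 : ZMod 2)}) = Nbo j := fun j => by simp only [and_assoc, Nbo]
  rw [sT] at rT fT
  rw [sM] at rM
  have rN : ∀ j, Module.finrank (ZMod 2) ↥(Nbo j) =
      {I : ℕ+ →₀ ℕ | Bcond I ∧ wt I = 4 * j}.ncard := fun j => by
    rw [← sN j]
    exact span_rank (fun I => Bcond I ∧ wt I = 4 * j) (hN j)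
  rw [T_ncard] at rT
  refine ⟨fT, rT, rT.trans rM.symm, ?_⟩
  refine rM.trans ((B_sum i).trans ?_)
  exact Finset.sum_congr rfl fun j _ => (rN j).symm
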